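/- Let I ⊆ ℝ be an open interval and A : I → gl(ℝ⁶) a differentiable curve with A(t) ∈ 𝔰𝔭(ℝ⁶) for all t, solving the bracket flow A′(t) = −(½ tr(S_{A(t)}²) + ¼ (tr(J A(t)))²)·A(t) + ½[A(t), [A(t), A(t)ᵗ]] + ½[A(t), S_{A(t)} ∘₆ S_{A(t)}]. Then for all t ∈ I: d/dt [ tr( (A(t) + A(t)ᵗ)² ) ] ≤ −⅛ ( tr( (A(t) + A(t)ᵗ)² ) )². -/

import Mathlib

open Matrix BigOperators

noncomputable section

abbrev M6 : Type := Matrix (Fin 6) (Fin 6) ℝ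
abbrev M7 : Type := Matrix (Fin 7) (Fin 7) ℝ

/-- The canonical almost complex structure `J` on `ℝ⁶`:
`Je₁ = e₂, Je₂ = −e₁, Je₃ = e₄, Je₄ = −e₃, Je₅ = e₆, Je₆ = −e₅` (0-based indices). -/
def J6 : M6 := Matrix.of fun i j =>
  if (i = 1 ∧ j = 0) ∨ (i = 3 ∧ j = 2) ∨ (i = 5 ∧ j = 4) then 1
  else if (i = 0 ∧ j = 1) ∨ (i = 2 ∧ j = 3) ∨ (i = 4 ∧ j = 5) then -1
  else 0

/-- `A ∈ 𝔰𝔭(ℝ⁶)` iff `AJ + JAᵗ = 0`. -/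
def inSp (A : M6) : Prop := A * J6 + J6 * Aᵀ = 0

/-- The symmetric part `S_A = ½(A + Aᵗ)`. -/
def symPart (A : M6) : M6 := (1/2 : ℝ) • (A + Aᵀ)

/-- Frobenius inner product `⟨X,Y⟩ = tr(XYᵗ)`. -/
def mdot {n : ℕ} (X Y : Matrix (Fin n) (Fin n) ℝ) : ℝ := (X * Yᵀ).trace

/-- Commutator `[X,Y] = XY − YX`. -/
def mcomm {n : ℕ} (X Y : Matrix (Fin n) (Fin n) ℝ) : Matrix (Fin n) (Fin n) ℝ := X * Y - Y * X

/-- Kronecker delta. -/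
def kdelta {n : ℕ} (x y : Fin n) : ℝ := if x = y then 1 else 0

/-- The totally antisymmetric 3-tensor `e^a ∧ e^b ∧ e^c` evaluated on `(e_i, e_j, e_k)`. -/
def alt3 {n : ℕ} (a b c i j k : Fin n) : ℝ :=
  Matrix.det !![kdelta a i, kdelta a j, kdelta a k;
                kdelta b i, kdelta b j, kdelta b k;
                kdelta c i, kdelta c j, kdelta c k]

/-- `ρ⁺ = e¹³⁵ − e¹⁴⁶ − e²⁴⁵ − e²³⁶` (here written with 0-based indices). -/
def rhoP (i j k : Fin 6) : ℝ :=
  alt3 0 2 4 i j k - alt3 0 3 5 i j k - alt3 1 3 4 i j k - alt3 1 2 5 i j k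

/-- `(h ∘₆ k)_{ab} = Σ_{m,n,p,q} h_{mn} k_{pq} ρ⁺_{mpa} ρ⁺_{nqb}`. -/
def circ6 (h k : M6) : M6 :=
  Matrix.of fun a b => ∑ m, ∑ n, ∑ p, ∑ q, h m n * k p q * rhoP m p a * rhoP n q b

/-- The bracket-flow vector field of the Laplacian coflow. -/
def Fflow (A : M6) : M6 :=
  (-((1/2 : ℝ) * (symPart A * symPart A).trace + (1/4 : ℝ) * ((J6 * A).trace)^2)) • A
  + (1/2 : ℝ) • mcomm A (mcomm A Aᵀ)
  + (1/2 : ℝ) • mcomm A (circ6 (symPart A) (symPart A))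

/-!
Write `S` for the symmetric part of `A` and `C = S ∘₆ S`. Since `tr (S [A, X]) = -½ ⟨X, [A, Aᵗ]⟩`,
the flow gives
`tr (S A') = -(½ tr S² + ¼ (tr J A)²) tr S² - ¼ (|[A, Aᵗ]|² + ⟨C, [A, Aᵗ]⟩)`,
and completing the square bounds the last term by `|C|² / 16`. So it suffices that
`|C|² ≤ 4 (tr S²)²`.

Now `A ∈ 𝔰𝔭(ℝ⁶)` makes `S` anticommute with `J`, so that `S` is the real part of a complex bilinear
form `H` on `ℂ³`, while `ρ⁺` is the real part of the complex volume form. Hence `S ∘₆ S` is four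
times the real form of `(adj H)ᴴ`, and with `P = H Hᴴ` the estimate follows from
`2 tr (adj P) = (tr P)² - tr P² ≤ (tr P)²`.
-/

section TraceForm

variable {n : ℕ}

theorem mdot_self_nonneg (X : Matrix (Fin n) (Fin n) ℝ) : 0 ≤ mdot X X :=
  (posSemidef_self_mul_conjTranspose X).trace_nonneg

theorem mdot_comm (X Y : Matrix (Fin n) (Fin n) ℝ) : mdot X Y = mdot Y X := by
  rw [mdot, mdot, ← trace_transpose, transpose_mul, transpose_transpose]

theorem neg_quarter_mdot_self_le (X Y : Matrix (Fin n) (Fin n) ℝ) :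
    -(1 / 4) * mdot Y Y ≤ mdot X X + mdot Y X := by
  have hsq := mdot_self_nonneg (X + (1 / 2 : ℝ) • Y)
  have hcomm := mdot_comm X Y
  simp only [mdot, transpose_add, transpose_smul, Matrix.add_mul, Matrix.mul_add, Matrix.smul_mul,
    Matrix.mul_smul, trace_add, trace_smul, smul_eq_mul] at hsq hcomm ⊢
  linarith

theorem trace_mul_mcomm (P Q X : Matrix (Fin n) (Fin n) ℝ) :
    (P * mcomm Q X).trace = (X * mcomm P Q).trace := by
  simp only [mcomm, Matrix.mul_sub, trace_sub, ← Matrix.mul_assoc]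
  rw [trace_mul_cycle P Q X, trace_mul_cycle X Q P]

end TraceForm

theorem trace_mul_transpose_of_isSymm {ι R : Type*} [Fintype ι] [CommSemiring R]
    {S : Matrix ι ι R} (hS : S.IsSymm) (X : Matrix ι ι R) : (S * Xᵀ).trace = (S * X).trace := by
  rw [← trace_transpose, transpose_mul, transpose_transpose, hS.eq, trace_mul_comm]

theorem hasDerivAt_trace_mul_self {𝕜 ι : Type*} [NontriviallyNormedField 𝕜] [Fintype ι]
    {B : 𝕜 → Matrix ι ι 𝕜} {B' : Matrix ι ι 𝕜} {t : 𝕜}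
    (hB : ∀ i j, HasDerivAt (fun s => B s i j) (B' i j) t) :
    HasDerivAt (fun s => (B s * B s).trace) (2 * (B t * B').trace) t := by
  have hval : 2 * (B t * B').trace = ∑ i, ∑ j, (B' i j * B t j i + B t i j * B' j i) := by
    rw [two_mul]
    nth_rw 1 [trace_mul_comm]
    simp only [trace, diag, mul_apply, Finset.sum_add_distrib]
  rw [hval]
  simp only [trace, diag, mul_apply]
  exact HasDerivAt.fun_sum fun i _ => HasDerivAt.fun_sum fun j _ => (hB i j).fun_mul (hB j i)

theorem map_star_mul {R l m n : Type*} [CommSemiring R] [StarRing R] [Fintype m]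
    (X : Matrix l m R) (Y : Matrix m n R) : (X * Y).map star = X.map star * Y.map star :=
  Matrix.map_mul (f := starRingEnd R)

theorem map_re_mul_map_re {l m n : Type*} [Fintype m] (X : Matrix l m ℂ) (Y : Matrix m n ℂ) :
    X.map Complex.re * Y.map Complex.re =
      (1 / 2 : ℝ) • (X * Y + X * Y.map star).map Complex.re := by
  ext i j
  simp only [mul_apply, map_apply, Matrix.smul_apply, Matrix.add_apply, Complex.add_re,
    Complex.re_sum, smul_eq_mul, Finset.mul_sum, ← Finset.sum_add_distrib]
  refine Finset.sum_congr rfl fun k _ => ?_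
  simp only [Complex.mul_re, Complex.star_def, Complex.conj_re, Complex.conj_im]
  ring

section Cofactor

variable {R : Type*} [CommRing R]

/-- The matrix of the alternating bilinear form `(x, y) ↦ det (x, y, v)`, that is, the contraction
of the volume form of `R³` with `v`. -/
def crossForm (v : Fin 3 → R) : Matrix (Fin 3) (Fin 3) R :=
  !![0, v 2, -v 1; -v 2, 0, v 0; v 1, -v 0, 0]

theorem mul_crossForm_mul_transpose (M : Matrix (Fin 3) (Fin 3) R) (v : Fin 3 → R) :
    M * crossForm v * Mᵀ = crossForm (M.adjugateᵀ *ᵥ v) := by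
  ext i j
  fin_cases i <;> fin_cases j <;>
    simp [crossForm, adjugate_fin_three, mul_apply, mulVec, dotProduct, Fin.sum_univ_three] <;> ring

theorem map_star_crossForm [StarRing R] (v : Fin 3 → R) :
    (crossForm v).map star = crossForm (star v) := by
  ext i j
  fin_cases i <;> fin_cases j <;> simp [crossForm]

theorem trace_crossForm_mul_conjTranspose [StarRing R] (u v : Fin 3 → R) :
    (crossForm u * (crossForm v)ᴴ).trace = 2 * (u ⬝ᵥ star v) := by
  simp only [crossForm, Fin.isValue, cons_mul, Nat.succ_eq_add_one, Nat.reduceAdd, empty_mul,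
    Equiv.symm_apply_apply, trace_fin_three, of_apply, cons_val', vecMul, dotProduct,
    conjTranspose_apply, cons_val_fin_one, cons_val_zero, Fin.sum_univ_three, star_zero, mul_zero,
    cons_val_one, zero_add, cons_val, star_neg, mul_neg, neg_mul, neg_neg, zero_mul, add_zero,
    neg_zero, Pi.star_apply]
  ring

theorem two_mul_trace_adjugate_fin_three (P : Matrix (Fin 3) (Fin 3) R) :
    2 * P.adjugate.trace = P.trace ^ 2 - (P * P).trace := by
  simp only [adjugate_fin_three, trace_fin_three, mul_apply, Fin.sum_univ_three, of_apply, cons_val]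
  ring

end Cofactor

open ComplexOrder in
theorem two_mul_re_trace_conjTranspose_adjugate_mul_le (H : Matrix (Fin 3) (Fin 3) ℂ) :
    2 * (H.adjugateᴴ * H.adjugate).trace.re ≤ (H * Hᴴ).trace.re ^ 2 := by
  have hadj : H.adjugateᴴ * H.adjugate = (H * Hᴴ).adjugate := by
    rw [adjugate_conjTranspose, adjugate_mul_distrib]
  have htr := congrArg Complex.re (two_mul_trace_adjugate_fin_three (H * Hᴴ))
  have hpos : 0 ≤ (H * Hᴴ * (H * Hᴴ)).trace.re := by
    have := (posSemidef_self_mul_conjTranspose (H * Hᴴ)).trace_nonneg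
    rw [(isHermitian_mul_conjTranspose_self H).eq] at this
    exact (Complex.le_def.1 this).1
  rw [hadj, sq]
  simp only [sq, Complex.sub_re, Complex.mul_re, Complex.re_ofNat, Complex.im_ofNat, zero_mul,
    sub_zero] at htr
  linarith [mul_self_nonneg (H * Hᴴ).trace.im]

/-- The matrix of the complex coordinates `z₁ = e¹ + i e²`, `z₂ = e³ + i e⁴`, `z₃ = e⁵ + i e⁶` on
`ℝ⁶`, which identify `(ℝ⁶, J6)` with `ℂ³`. Its columns are the images in `ℂ³` of the standard basis
of `ℝ⁶`. -/
def coframe : Matrix (Fin 3) (Fin 6) ℂ := Matrix.of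
  ![fun i => kdelta 0 i + kdelta 1 i * Complex.I,
    fun i => kdelta 2 i + kdelta 3 i * Complex.I,
    fun i => kdelta 4 i + kdelta 5 i * Complex.I]

theorem coframe_mul_transpose : coframe * coframeᵀ = 0 := by
  ext k l
  fin_cases k <;> fin_cases l <;>
    simp [coframe, kdelta, mul_apply, Fin.sum_univ_six]

theorem coframe_mul_conjTranspose : coframe * coframeᴴ = (2 : ℝ) • 1 := by
  ext k l
  fin_cases k <;> fin_cases l <;>
    simp [coframe, kdelta, mul_apply, Fin.sum_univ_six, one_add_one_eq_two]

theorem map_star_coframe_mul_transpose : coframe.map star * coframeᵀ = (2 : ℝ) • 1 := by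
  rw [← transpose_inj, transpose_mul, transpose_transpose, ← conjTranspose_transpose,
    transpose_transpose, coframe_mul_conjTranspose, transpose_smul, transpose_one]

theorem conjTranspose_mul_coframe :
    coframeᴴ * coframe = 1 - Complex.I • Complex.ofRealHom.mapMatrix J6 := by
  ext i j
  fin_cases i <;> fin_cases j <;>
    simp [coframe, kdelta, J6, mul_apply, Fin.sum_univ_three]

theorem transpose_mul_map_star_coframe :
    coframeᵀ * coframe.map star = 1 + Complex.I • Complex.ofRealHom.mapMatrix J6 := by
  ext i j
  fin_cases i <;> fin_cases j <;>
    simp [coframe, kdelta, J6, mul_apply, Fin.sum_univ_three]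

theorem J6_mul_J6 : J6 * J6 = -1 := by
  ext i j
  fin_cases i <;> fin_cases j <;> simp [J6, mul_apply]

/-- The matrix of the real bilinear form `(x, y) ↦ Re (xᵗ H y)` on `ℝ⁶ = ℂ³`. As endomorphisms,
these are the complex antilinear maps of `(ℝ⁶, J6)`. -/
def realForm (H : Matrix (Fin 3) (Fin 3) ℂ) : M6 := (coframeᵀ * H * coframe).map Complex.re

theorem realForm_apply (H : Matrix (Fin 3) (Fin 3) ℂ) (i j : Fin 6) :
    realForm H i j = (coframe.col i ⬝ᵥ H *ᵥ coframe.col j).re := by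
  rw [dotProduct_mulVec]
  rfl

theorem transpose_realForm (H : Matrix (Fin 3) (Fin 3) ℂ) : (realForm H)ᵀ = realForm Hᵀ := by
  simp only [realForm, ← transpose_map, transpose_mul, transpose_transpose, Matrix.mul_assoc]

theorem rhoP_eq_realForm (i j k : Fin 6) :
    rhoP i j k = realForm (crossForm (coframe.col k)) i j := by
  simp only [rhoP, alt3, Fin.isValue, det_fin_three, of_apply, cons_val', cons_val_zero,
    cons_val_fin_one, cons_val_one, cons_val, realForm, coframe, crossForm, col_apply, neg_add_rev,
    map_apply, mul_apply, transpose_apply, Fin.sum_univ_three, mul_zero, zero_add, add_zero,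
    Complex.add_re, Complex.mul_re, Complex.ofReal_re, Complex.I_re, Complex.ofReal_im,
    Complex.I_im, mul_one, sub_self, Complex.neg_re, neg_zero, mul_neg, Complex.add_im,
    Complex.mul_im, Complex.neg_im, sub_neg_eq_add]
  ring

theorem realForm_mul_realForm (H K : Matrix (Fin 3) (Fin 3) ℂ) :
    realForm H * realForm K =
      (coframeᵀ * H * K.map star * coframe.map star).map Complex.re := by
  have hlin : coframeᵀ * H * coframe * (coframeᵀ * K * coframe) = 0 :=
    calc
      _ = coframeᵀ * H * (coframe * coframeᵀ) * K * coframe := by simp only [Matrix.mul_assoc]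
      _ = 0 := by simp [coframe_mul_transpose]
  have hconj : coframeᵀ * H * coframe * (coframeᵀ * K * coframe).map star =
      (2 : ℝ) • (coframeᵀ * H * K.map star * coframe.map star) :=
    calc
      _ = coframeᵀ * H * (coframe * coframeᴴ) * K.map star * coframe.map star := by
        simp only [Matrix.mul_assoc, map_star_mul, conjTranspose, transpose_map]
      _ = _ := by simp [coframe_mul_conjTranspose]
  rw [realForm, realForm, map_re_mul_map_re, hlin, hconj]
  ext
  simp

theorem realForm_mul_realForm_mul_realForm (H K L : Matrix (Fin 3) (Fin 3) ℂ) :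
    realForm H * realForm K * realForm L = realForm (H * K.map star * L) := by
  have hlin : coframeᵀ * H * K.map star * coframe.map star * (coframeᵀ * L * coframe) =
      (2 : ℝ) • (coframeᵀ * (H * K.map star * L) * coframe) :=
    calc
      _ = coframeᵀ * H * K.map star * (coframe.map star * coframeᵀ) * L * coframe := by
        simp only [Matrix.mul_assoc]
      _ = _ := by
        rw [map_star_coframe_mul_transpose]
        simp [Matrix.mul_assoc]
  have hconj : coframeᵀ * H * K.map star * coframe.map star *
      (coframeᵀ * L * coframe).map star = 0 :=
    calc
      _ = coframeᵀ * H * K.map star * (coframe * coframeᵀ).map star * L.map star *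
          coframe.map star := by simp only [Matrix.mul_assoc, map_star_mul]
      _ = 0 := by simp [coframe_mul_transpose]
  rw [realForm_mul_realForm, realForm, realForm, map_re_mul_map_re, hlin, hconj]
  ext
  simp

theorem mdot_realForm (H K : Matrix (Fin 3) (Fin 3) ℂ) :
    mdot (realForm H) (realForm K) = 2 * (H * Kᴴ).trace.re :=
  calc
    _ = (coframeᵀ * H * Kᴴ * coframe.map star).trace.re := by
      rw [mdot, transpose_realForm, realForm_mul_realForm]
      exact (AddMonoidHom.map_trace Complex.reAddGroupHom _).symm
    _ = (coframe.map star * coframeᵀ * (H * Kᴴ)).trace.re := by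
      rw [trace_mul_comm, Matrix.mul_assoc, ← Matrix.mul_assoc]
    _ = _ := by
      rw [map_star_coframe_mul_transpose]
      simp

theorem exists_realForm_eq {h : M6} (hJ : h * J6 + J6 * h = 0) : ∃ H, realForm H = h := by
  let Φ := Complex.ofRealHom.mapMatrix (m := Fin 6)
  set j := Complex.I • Φ J6 with hj
  have hjj : j * j = 1 := by
    have hJJ : Φ J6 * Φ J6 = -1 := by rw [← map_mul, J6_mul_J6, map_neg, map_one]
    rw [hj, smul_mul_smul_comm, hJJ, Complex.I_mul_I]
    simp
  have hjh : j * Φ h = -(Φ h * j) := by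
    have hJh : Φ J6 * Φ h = -(Φ h * Φ J6) := by
      rw [← map_mul, ← map_mul, ← map_neg, eq_neg_of_add_eq_zero_right hJ]
    rw [hj, Matrix.smul_mul, Matrix.mul_smul, hJh, smul_neg]
  have hexpand : (1 + j) * Φ h * (1 - j) = (2 : ℝ) • (Φ h - Φ h * j) :=
    calc
      _ = Φ h - Φ h * j + j * Φ h - j * Φ h * j := by noncomm_ring
      _ = _ := by
        rw [hjh, Matrix.neg_mul, Matrix.mul_assoc, hjj, two_smul, Matrix.mul_one]
        abel
  -- The form `H = ½ z̄ h zᴴ`, with `z` the coframe, pulls back to `½ (1 + iJ) h (1 - iJ)`, which is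
  -- `h - i h J` because `h` anticommutes with `J`.
  have hform : coframeᵀ * ((1 / 2 : ℝ) • (coframe.map star * Φ h * coframeᴴ)) * coframe =
      Φ h - Φ h * j :=
    calc
      _ = (1 / 2 : ℝ) • (coframeᵀ * coframe.map star * Φ h * (coframeᴴ * coframe)) := by
        simp only [Matrix.mul_assoc, Matrix.mul_smul, Matrix.smul_mul]
      _ = (1 / 2 : ℝ) • ((1 + j) * Φ h * (1 - j)) := by
        rw [transpose_mul_map_star_coframe, conjTranspose_mul_coframe]
      _ = Φ h - Φ h * j := by simp [hexpand]
  refine ⟨(1 / 2 : ℝ) • (coframe.map star * Φ h * coframeᴴ), ?_⟩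
  rw [realForm, hform]
  ext a b
  simp [Φ, hj, mul_apply]

theorem circ6_apply (h k : M6) (a b : Fin 6) :
    circ6 h k a b = mdot (of fun m p => rhoP m p a)
      (h * (of fun n q => rhoP n q b) * kᵀ) := by
  simp only [circ6, mdot, of_apply, trace, diag, mul_apply, transpose_apply, Finset.mul_sum,
    Finset.sum_mul]
  refine Finset.sum_congr rfl fun m _ => ?_
  rw [Finset.sum_comm]
  refine Finset.sum_congr rfl fun p _ => ?_
  rw [Finset.sum_comm]
  refine Finset.sum_congr rfl fun n _ => Finset.sum_congr rfl fun q _ => ?_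
  ring

theorem circ6_realForm (H : Matrix (Fin 3) (Fin 3) ℂ) :
    circ6 (realForm H) (realForm H) = (4 : ℝ) • realForm H.adjugateᴴ := by
  ext a b
  have hrho (c : Fin 6) :
      (of fun i j => rhoP i j c) = realForm (crossForm (coframe.col c)) := by
    ext i j
    exact rhoP_eq_realForm i j c
  have hstar : star (H.adjugateᵀ *ᵥ star (coframe.col b)) = H.adjugateᴴ *ᵥ coframe.col b := by
    rw [star_mulVec, star_star, ← mulVec_transpose, transpose_conjTranspose]
    rfl
  rw [circ6_apply, hrho, hrho, transpose_realForm, realForm_mul_realForm_mul_realForm,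
    map_star_crossForm, mul_crossForm_mul_transpose, mdot_realForm,
    trace_crossForm_mul_conjTranspose, hstar, Matrix.smul_apply, realForm_apply]
  simp only [Complex.mul_re, Complex.re_ofNat, Complex.im_ofNat, zero_mul, sub_zero, smul_eq_mul]
  ring

theorem mdot_circ6_self_le {h : M6} (hJ : h * J6 + J6 * h = 0) :
    mdot (circ6 h h) (circ6 h h) ≤ 4 * mdot h h ^ 2 := by
  obtain ⟨H, rfl⟩ := exists_realForm_eq hJ
  have hcirc : mdot (circ6 (realForm H) (realForm H)) (circ6 (realForm H) (realForm H)) =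
      16 * (2 * (H.adjugateᴴ * H.adjugate).trace.re) := by
    rw [circ6_realForm, ← conjTranspose_conjTranspose H.adjugate, ← mdot_realForm]
    simp only [mdot, conjTranspose_conjTranspose, transpose_smul, Algebra.mul_smul_comm,
      Algebra.smul_mul_assoc, trace_smul, smul_eq_mul]
    ring
  rw [hcirc, mdot_realForm]
  linarith [two_mul_re_trace_conjTranspose_adjugate_mul_le H]

theorem symPart_isSymm (A : M6) : (symPart A).IsSymm := by
  simp [symPart, IsSymm, add_comm]

theorem mcomm_symPart_self (A : M6) : mcomm (symPart A) A = (-(1 / 2) : ℝ) • mcomm A Aᵀ := by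
  simp only [mcomm, symPart, Matrix.smul_mul, Matrix.mul_smul, ← smul_sub, neg_smul, ← smul_neg]
  congr 1
  noncomm_ring

theorem trace_symPart_mul_self (A : M6) :
    (symPart A * A).trace = (symPart A * symPart A).trace := by
  nth_rw 3 [symPart]
  rw [Matrix.mul_smul, Matrix.mul_add, trace_smul, trace_add,
    trace_mul_transpose_of_isSymm (symPart_isSymm A), smul_eq_mul]
  ring

theorem trace_symPart_mul_mcomm_self (A X : M6) :
    (symPart A * mcomm A X).trace = -(1 / 2) * mdot X (mcomm A Aᵀ) := by
  have hsymm : (mcomm A Aᵀ)ᵀ = mcomm A Aᵀ := by simp [mcomm]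
  rw [trace_mul_mcomm, mcomm_symPart_self, Matrix.mul_smul, trace_smul, smul_eq_mul, mdot, hsymm]

theorem J6_mul_of_inSp {A : M6} (hA : inSp A) : J6 * A = -(Aᵀ * J6) := by
  have hAJ : A * J6 = -(J6 * Aᵀ) := eq_neg_of_add_eq_zero_left hA
  calc
    J6 * A = -(J6 * (A * J6) * J6) := by simp [Matrix.mul_assoc, J6_mul_J6]
    _ = J6 * J6 * Aᵀ * J6 := by simp [hAJ, Matrix.mul_assoc]
    _ = -(Aᵀ * J6) := by simp [J6_mul_J6]

theorem symPart_mul_J6_add_J6_mul_symPart {A : M6} (hA : inSp A) :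
    symPart A * J6 + J6 * symPart A = 0 := by
  have hAJ : A * J6 = -(J6 * Aᵀ) := eq_neg_of_add_eq_zero_left hA
  rw [symPart, Matrix.smul_mul, Matrix.mul_smul, Matrix.add_mul, Matrix.mul_add,
    J6_mul_of_inSp hA, hAJ, ← smul_add]
  simp

theorem trace_symPart_mul_Fflow (A : M6) :
    (symPart A * Fflow A).trace =
      -((1 / 2) * (symPart A * symPart A).trace + (1 / 4) * (J6 * A).trace ^ 2) *
          (symPart A * symPart A).trace -
        (1 / 4) * (mdot (mcomm A Aᵀ) (mcomm A Aᵀ) +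
          mdot (circ6 (symPart A) (symPart A)) (mcomm A Aᵀ)) := by
  simp only [Fflow, Matrix.mul_add, Matrix.mul_smul, trace_add, trace_smul, smul_eq_mul,
    trace_symPart_mul_self, trace_symPart_mul_mcomm_self]
  ring

theorem trace_symPart_mul_Fflow_le {A : M6} (hA : inSp A) :
    (symPart A * Fflow A).trace ≤ -(1 / 4) * (symPart A * symPart A).trace ^ 2 := by
  have hS : mdot (symPart A) (symPart A) = (symPart A * symPart A).trace := by
    rw [mdot, (symPart_isSymm A).eq]
  have hcirc := mdot_circ6_self_le (symPart_mul_J6_add_J6_mul_symPart hA)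
  have hsquare := neg_quarter_mdot_self_le (mcomm A Aᵀ) (circ6 (symPart A) (symPart A))
  have hJ : 0 ≤ (J6 * A).trace ^ 2 * (symPart A * symPart A).trace :=
    mul_nonneg (sq_nonneg _) (hS ▸ mdot_self_nonneg _)
  rw [hS] at hcirc
  rw [trace_symPart_mul_Fflow]
  linarith

/-- Along any bracket flow solution in `𝔰𝔭(ℝ⁶)` on an open interval,
`d/dt tr((A + Aᵗ)²) ≤ −⅛ (tr((A + Aᵗ)²))²`. -/
theorem scalar_curvature_evolution (a b : ℝ) (A : ℝ → M6)
    (hsp : ∀ t ∈ Set.Ioo a b, inSp (A t))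
    (hflow : ∀ t ∈ Set.Ioo a b, ∀ i j, HasDerivAt (fun s => A s i j) (Fflow (A t) i j) t) :
    ∀ t ∈ Set.Ioo a b, ∃ r : ℝ,
      HasDerivAt (fun s => ((A s + (A s)ᵀ) * (A s + (A s)ᵀ)).trace) r t ∧
      r ≤ -(1/8) * (((A t + (A t)ᵀ) * (A t + (A t)ᵀ)).trace)^2 := by
  intro t ht
  have hderiv (i j : Fin 6) : HasDerivAt (fun s => (A s + (A s)ᵀ) i j)
      ((Fflow (A t) + (Fflow (A t))ᵀ) i j) t :=
    (hflow t ht i j).add (hflow t ht j i)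
  refine ⟨_, hasDerivAt_trace_mul_self hderiv, ?_⟩
  have hS : A t + (A t)ᵀ = (2 : ℝ) • symPart (A t) := by simp [symPart]
  have hF : (symPart (A t) * (Fflow (A t))ᵀ).trace = (symPart (A t) * Fflow (A t)).trace :=
    trace_mul_transpose_of_isSymm (symPart_isSymm _) _
  simp only [hS, Matrix.smul_mul, Matrix.mul_smul, Matrix.mul_add, trace_smul, trace_add, hF,
    smul_eq_mul]
  linarith [trace_symPart_mul_Fflow_le (hsp t ht)]
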